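/- arXiv:2509.21581 — 2 statements merged into one kernel-verified Lean document; each statement's English description precedes it below -/
import Mathlib

section
/- Let β be a nonzero real number and let g : ℝ² → ℂ be the function g(ρ) = exp(−iπ‖ρ‖²). Then for every ρ' ∈ ℝ², the Gaussian-regularized value of H_β[g](ρ') equals g(ρ'); that is, the limit as ε → 0⁺ of (i·e^β/sinh β)·exp(−iπ‖ρ'‖²·coth β)·∫_{ℝ²} exp(−πε‖ρ‖²)·exp(−iπ‖ρ‖²·coth β)·exp(2πi(ρ'⋅ρ)/sinh β)·exp(−iπ‖ρ‖²) dρ is exp(−iπ‖ρ'‖²). In other words, g is an eigenfunction of the hyperbolic fractional Fourier transformation of the first kind H_β with eigenvalue 1. -/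
open MeasureTheory Filter
open scoped RealInnerProductSpace

noncomputable section

/-- The Euclidean plane `ℝ²`. -/
abbrev Plane := EuclideanSpace ℝ (Fin 2)

/-- Gaussian-regularized hyperbolic fractional Fourier transformation of the first kind:
the integrand carries the extra factor `exp (-π ε ‖ρ‖²)`. -/
def fracHreg (β ε : ℝ) (f : Plane → ℂ) (ρ' : Plane) : ℂ :=
  Complex.I * Real.exp β / Real.sinh β *
    Complex.exp (-(Complex.I * Real.pi * ‖ρ'‖ ^ 2 * (Real.cosh β / Real.sinh β))) *
    ∫ ρ : Plane,
      Complex.exp (-(Real.pi * ε * ‖ρ‖ ^ 2 : ℝ)) *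
      Complex.exp (-(Complex.I * Real.pi * ‖ρ‖ ^ 2 * (Real.cosh β / Real.sinh β))) *
      Complex.exp (2 * Real.pi * Complex.I * ⟪ρ', ρ⟫ / Real.sinh β) * f ρ

/-!
The regularized transform of a complex Gaussian is a Gaussian integral whose parameter lies in the
open right half-plane; its closed form extends continuously to the nonzero points of the imaginary
axis. Hence `H_β` sends the Gaussian with parameter `a` to a multiple of the Gaussian with parameter
`i coth β + 1 / (sinh² β (a + i coth β))`, and `a = i` is a fixed point of this Möbius map because
`i + i coth β = i e^β / sinh β` and `cosh² β - sinh² β = 1`.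
-/

section ComplexGaussian

open Complex
open scoped Real Topology

variable {V : Type*} [NormedAddCommGroup V]

/-- The Gaussian `exp (-π a ‖v‖²)` with complex parameter `a`. For imaginary `a` it is a
chirp; the eigenfunction of `H_β` is the case `a = i`. -/
def complexGaussian (a : ℂ) (v : V) : ℂ :=
  cexp (-(π * a * ‖v‖ ^ 2))

lemma complexGaussian_add (a b : ℂ) (v : V) :
    complexGaussian (a + b) v = complexGaussian a v * complexGaussian b v := by
  simp only [complexGaussian, ← Complex.exp_add]
  ring_nf

variable [InnerProductSpace ℝ V] [FiniteDimensional ℝ V] [MeasurableSpace V] [BorelSpace V]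

lemma integral_complexGaussian_mul_cexp_inner {a : ℂ} (ha : 0 < a.re) (c : ℂ) (w : V) :
    ∫ v : V, complexGaussian a v * cexp (2 * π * I * c * ⟪w, v⟫) =
      a⁻¹ ^ (Module.finrank ℝ V / 2 : ℂ) * complexGaussian (c ^ 2 / a) w := by
  have hπ : (π : ℂ) ≠ 0 := ofReal_ne_zero.mpr Real.pi_ne_zero
  have ha₀ : a ≠ 0 := ne_zero_of_re_pos ha
  have hre : 0 < (π * a).re := by
    rw [re_ofReal_mul]
    exact mul_pos Real.pi_pos ha
  have hbase : (π : ℂ) / (π * a) = a⁻¹ := by field_simp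
  have hexponent :
      (2 * π * I * c) ^ 2 * (‖w‖ : ℂ) ^ 2 / (4 * (π * a)) = -(π * (c ^ 2 / a) * ‖w‖ ^ 2) := by
    field_simp
    linear_combination 4 * c ^ 2 * (‖w‖ : ℂ) ^ 2 * I_sq
  have key := GaussianFourier.integral_cexp_neg_mul_sq_norm_add hre (2 * π * I * c) w
  rw [hbase, hexponent] at key
  simpa only [complexGaussian, ← Complex.exp_add, neg_mul] using key

lemma mem_slitPlane_of_re_nonneg {z : ℂ} (hre : 0 ≤ z.re) (hz : z ≠ 0) : z ∈ slitPlane :=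
  mem_slitPlane_iff.mpr <| hre.lt_or_eq.imp_right fun hre₀ him => hz (Complex.ext hre₀.symm him)

lemma tendsto_integral_complexGaussian_mul_cexp_inner {a : ℂ} (hre : 0 ≤ a.re) (ha : a ≠ 0)
    (c : ℂ) (w : V) :
    Tendsto (fun z : ℂ => ∫ v : V, complexGaussian z v * cexp (2 * π * I * c * ⟪w, v⟫))
      (𝓝[{z | 0 < z.re}] a)
      (𝓝 (a⁻¹ ^ (Module.finrank ℝ V / 2 : ℂ) * complexGaussian (c ^ 2 / a) w)) := by
  have hclosed : ContinuousAt
      (fun z : ℂ => z⁻¹ ^ (Module.finrank ℝ V / 2 : ℂ) * complexGaussian (c ^ 2 / z) w) a := by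
    unfold complexGaussian
    have hinv_re : 0 ≤ (a⁻¹).re := by
      rw [inv_re]
      exact div_nonneg hre (normSq_nonneg a)
    have hslit := mem_slitPlane_of_re_nonneg hinv_re (inv_ne_zero ha)
    fun_prop (disch := assumption)
  exact (hclosed.tendsto.mono_left nhdsWithin_le_nhds).congr'
    (eventually_nhdsWithin_of_forall fun z hz =>
      (integral_complexGaussian_mul_cexp_inner hz c w).symm)

lemma tendsto_ofReal_add_nhdsWithin_re_pos {z : ℂ} (hz : 0 ≤ z.re) :
    Tendsto (fun ε : ℝ => (ε : ℂ) + z) (𝓝[>] 0) (𝓝[{w | 0 < w.re}] z) := by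
  refine tendsto_nhdsWithin_iff.mpr ⟨?_, eventually_nhdsWithin_of_forall fun ε hε => ?_⟩
  · have hcont : Continuous fun ε : ℝ => (ε : ℂ) + z := by fun_prop
    simpa only [ofReal_zero, zero_add] using (hcont.tendsto 0).mono_left nhdsWithin_le_nhds
  · simpa only [Set.mem_ofPred_eq, add_re, ofReal_re] using add_pos_of_pos_of_nonneg hε hz

lemma fracHreg_complexGaussian (β ε : ℝ) (a : ℂ) (ρ' : Plane) :
    fracHreg β ε (complexGaussian a) ρ' =
      I * Real.exp β / Real.sinh β * complexGaussian (I * (Real.cosh β / Real.sinh β)) ρ' *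
        ∫ ρ : Plane, complexGaussian (ε + (a + I * (Real.cosh β / Real.sinh β))) ρ *
          cexp (2 * π * I * (Real.sinh β : ℂ)⁻¹ * ⟪ρ', ρ⟫) := by
  simp only [fracHreg, complexGaussian_add]
  simp only [complexGaussian, ← Complex.exp_add]
  congr 2
  · ring_nf
  · refine funext fun ρ => congrArg cexp ?_
    push_cast
    ring

lemma tendsto_fracHreg_complexGaussian (β : ℝ) {a : ℂ} (hre : 0 ≤ a.re)
    (ha : a + I * (Real.cosh β / Real.sinh β) ≠ 0) (ρ' : Plane) :
    Tendsto (fun ε : ℝ => fracHreg β ε (complexGaussian a) ρ') (𝓝[>] 0)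
      (𝓝 (I * Real.exp β / Real.sinh β / (a + I * (Real.cosh β / Real.sinh β)) *
        complexGaussian (I * (Real.cosh β / Real.sinh β) +
          (Real.sinh β : ℂ)⁻¹ ^ 2 / (a + I * (Real.cosh β / Real.sinh β))) ρ')) := by
  set κ : ℂ := I * (Real.cosh β / Real.sinh β) with hκ
  have hκre : κ.re = 0 := by
    rw [hκ, ← ofReal_div, re_mul_ofReal, I_re, zero_mul]
  have hsum_re : 0 ≤ (a + κ).re := by rwa [add_re, hκre, add_zero]
  have hintegral := (tendsto_integral_complexGaussian_mul_cexp_inner hsum_re ha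
    (Real.sinh β : ℂ)⁻¹ ρ').comp (tendsto_ofReal_add_nhdsWithin_re_pos hsum_re)
  simp only [finrank_euclideanSpace_fin, Nat.cast_ofNat, div_self (two_ne_zero' ℂ),
    cpow_one] at hintegral
  convert! hintegral.const_mul (I * Real.exp β / Real.sinh β * complexGaussian κ ρ') using 2
  · exact fracHreg_complexGaussian β _ a ρ'
  · rw [complexGaussian_add]
    ring

lemma I_add_I_mul_coth {β : ℝ} (hβ : β ≠ 0) :
    I + I * (Real.cosh β / Real.sinh β) = I * Real.exp β / Real.sinh β := by
  have hs : (Real.sinh β : ℂ) ≠ 0 := ofReal_ne_zero.mpr (Real.sinh_ne_zero.mpr hβ)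
  rw [← Real.cosh_add_sinh β, ofReal_add]
  field_simp
  ring

lemma I_mul_coth_add_inv_sinh_sq_div {β : ℝ} (hβ : β ≠ 0) :
    I * (Real.cosh β / Real.sinh β) +
      (Real.sinh β : ℂ)⁻¹ ^ 2 / (I + I * (Real.cosh β / Real.sinh β)) = I := by
  have hs : (Real.sinh β : ℂ) ≠ 0 := ofReal_ne_zero.mpr (Real.sinh_ne_zero.mpr hβ)
  have hsq : (Real.cosh β : ℂ) ^ 2 - Real.sinh β ^ 2 = 1 := by
    exact_mod_cast Real.cosh_sq_sub_sinh_sq β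
  rw [I_add_I_mul_coth hβ, ← Real.cosh_add_sinh β, ofReal_add]
  field_simp
  linear_combination I ^ 2 * hsq + I_sq

end ComplexGaussian

/-- `g(ρ) = exp(−iπ‖ρ‖²)` is an eigenfunction of `H_β` (Gaussian-regularized)
with eigenvalue `1`. -/
theorem stmt0 (β : ℝ) (hβ : β ≠ 0)
    (g : Plane → ℂ) (hg : ∀ ρ, g ρ = Complex.exp (-(Complex.I * Real.pi * ‖ρ‖ ^ 2)))
    (ρ' : Plane) :
    Tendsto (fun ε : ℝ => fracHreg β ε g ρ')
      (nhdsWithin 0 (Set.Ioi 0)) (nhds (g ρ')) := by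
  obtain rfl : g = complexGaussian Complex.I := by
    ext ρ
    rw [hg, complexGaussian, mul_comm Complex.I]
  have hne : Complex.I + Complex.I * (Real.cosh β / Real.sinh β) ≠ 0 := by
    rw [I_add_I_mul_coth hβ]
    simp [-Complex.ofReal_sinh, Real.sinh_ne_zero.mpr hβ]
  have hlim := tendsto_fracHreg_complexGaussian β Complex.I_re.ge hne ρ'
  rwa [I_mul_coth_add_inv_sinh_sq_div hβ, ← I_add_I_mul_coth hβ, div_self hne, one_mul] at hlim

end
end

section
/- Let β be a nonzero real number and let f ∈ 𝓢(ℝ², ℂ). Then for every ρ' ∈ ℝ², H_{−β}[H_β[f]](ρ') = f(ρ'), where the outer transformation H_{−β} is applied to the function σ ↦ H_β[f](σ). That is, H_{−β} is the inverse of H_β on Schwartz functions: H_β^{−1} = H_{−β}. -/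
open MeasureTheory Filter
open scoped RealInnerProductSpace

noncomputable section

/-- Hyperbolic fractional-order Fourier transformation of the first kind of order `β`
(for `β ≠ 0`), with `coth β = cosh β / sinh β`. -/
def fracH (β : ℝ) (f : Plane → ℂ) (ρ' : Plane) : ℂ :=
  Complex.I * Real.exp β / Real.sinh β *
    Complex.exp (-(Complex.I * Real.pi * ‖ρ'‖ ^ 2 * (Real.cosh β / Real.sinh β))) *
    ∫ ρ : Plane,
      Complex.exp (-(Complex.I * Real.pi * ‖ρ‖ ^ 2 * (Real.cosh β / Real.sinh β))) *
      Complex.exp (2 * Real.pi * Complex.I * ⟪ρ', ρ⟫ / Real.sinh β) * f ρ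

/-!
Put `c = coth β` and `s = sinh β`. Up to constants and dilations, `H_β` is multiplication by the
chirp `exp (-iπ c ‖ρ‖²)`, then a Fourier transform, then multiplication by the same chirp again.
Since `coth` is odd, the inner chirp of `H_{-β}` cancels the outer chirp of `H_β`, and the two
Fourier transforms meet with dilations by `-s⁻¹` and `s⁻¹`. Together they form `𝓕⁻ ∘ 𝓕` with
Jacobian `s²`, which is cancelled by the product `s⁻²` of the two leading constants.
-/

open scoped ContDiff FourierTransform

section Circle

variable {X F : Type*} [MeasurableSpace X] {μ : Measure X} [NormedAddCommGroup F]
  [NormedSpace ℂ F]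

lemma integrable_circle_smul_iff {u : X → Circle} (hu : AEStronglyMeasurable u μ) {f : X → F} :
    Integrable (fun x ↦ u x • f x) μ ↔ Integrable f μ := by
  have smul_of_integrable {v : X → Circle} {g : X → F} (hv : AEStronglyMeasurable v μ)
      (hg : Integrable g μ) : Integrable (fun x ↦ v x • g x) μ := by
    simpa only [← integrable_norm_iff (hv.fun_smul hg.1), Circle.norm_smul] using hg.norm
  refine ⟨fun h ↦ ?_, smul_of_integrable hu⟩
  simpa only [Pi.inv_apply, inv_smul_smul] using smul_of_integrable hu.inv h

end Circle

section FourierChar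

lemma iteratedDeriv_fourierChar (n : ℕ) :
    iteratedDeriv n (𝐞 · : ℝ → ℂ) = fun t ↦ (2 * Real.pi * Complex.I) ^ n * (𝐞 t : ℂ) := by
  induction n with
  | zero => simp
  | succ n ih =>
    funext t
    rw [iteratedDeriv_succ, ih, deriv_const_mul _ (Real.differentiable_fourierChar t),
      Real.deriv_fourierChar]
    ring

lemma hasTemperateGrowth_fourierChar : (𝐞 · : ℝ → ℂ).HasTemperateGrowth := by
  refine ⟨?_, fun n ↦ ⟨0, ‖(2 * Real.pi * Complex.I : ℂ) ^ n‖, fun t ↦ ?_⟩⟩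
  · simp only [Real.fourierChar_apply]
    have hphase : ContDiff ℝ ∞ fun t : ℝ ↦ ((2 * Real.pi * t : ℝ) : ℂ) :=
      Complex.ofRealCLM.contDiff.comp (contDiff_const.mul contDiff_id)
    exact (hphase.mul contDiff_const).cexp
  · rw [norm_iteratedFDeriv_eq_norm_iteratedDeriv, iteratedDeriv_fourierChar, norm_mul,
      Circle.norm_coe, pow_zero]

end FourierChar

section Chirp

variable {V : Type*} [SeminormedAddCommGroup V]

/-- The quadratic chirp of rate `c`, that is, the unimodular function `x ↦ exp (-iπ c ‖x‖²)`. The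
transformation `H_β` multiplies by the chirp of rate `coth β` before and after a Fourier
transform. It is valued in `Circle` so that it acts by isometries. -/
def chirp (c : ℝ) (x : V) : Circle :=
  𝐞 (-(c * ‖x‖ ^ 2 / 2))

lemma coe_chirp (c : ℝ) (x : V) :
    (chirp c x : ℂ) = Complex.exp (-(Complex.I * Real.pi * ‖x‖ ^ 2 * c)) := by
  rw [chirp, Real.fourierChar_apply]
  congr 1
  push_cast
  ring

lemma chirp_neg (c : ℝ) (x : V) : chirp (-c) x = (chirp c x)⁻¹ := by
  rw [chirp, chirp, ← AddChar.map_neg_eq_inv, neg_mul, neg_div]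

lemma continuous_chirp (c : ℝ) : Continuous (chirp c : V → Circle) :=
  Real.continuous_fourierChar.comp (by fun_prop)

lemma hasTemperateGrowth_chirp {W : Type*} [NormedAddCommGroup W] [InnerProductSpace ℝ W]
    (c : ℝ) : (fun x : W ↦ (chirp c x : ℂ)).HasTemperateGrowth := by
  have hphase : (fun x : W ↦ -(c * ‖x‖ ^ 2 / 2)).HasTemperateGrowth := by
    simp only [div_eq_mul_inv]
    fun_prop
  exact hasTemperateGrowth_fourierChar.comp hphase

end Chirp

section Fourier

variable {V E : Type*} [NormedAddCommGroup V] [InnerProductSpace ℝ V] [FiniteDimensional ℝ V]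
  [MeasurableSpace V] [BorelSpace V] [NormedAddCommGroup E] [NormedSpace ℂ E]

lemma fourier_const_smul (a : ℂ) (g : V → E) (x : V) :
    𝓕 (fun y ↦ a • g y) x = a • 𝓕 g x :=
  congrFun (VectorFourier.fourierIntegral_const_smul 𝐞 volume (innerₗ V) g a) x

lemma fourier_comp_inv_smul (g : V → E) {r : ℝ} (hr : r ≠ 0) (x : V) :
    𝓕 (fun y ↦ g (r⁻¹ • y)) x = |r ^ Module.finrank ℝ V| • 𝓕 g (r • x) := by
  have hinner (v : V) : ⟪r⁻¹ • v, r • x⟫ = ⟪v, x⟫ := by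
    rw [real_inner_smul_left, real_inner_smul_right, inv_mul_cancel_left₀ hr]
  rw [Real.fourier_eq, Real.fourier_eq,
    ← Measure.integral_comp_inv_smul volume (fun v ↦ 𝐞 (-⟪v, r • x⟫) • g v)]
  simp only [hinner]

lemma integrable_fourier_chirp_smul (c : ℝ) (f : SchwartzMap V E) :
    Integrable (𝓕 fun y ↦ chirp c y • f y) := by
  have hcoe : (fun y ↦ chirp c y • f y) = SchwartzMap.smulLeftCLM E (fun y ↦ (chirp c y : ℂ)) f :=
    (SchwartzMap.smulLeftCLM_apply (hasTemperateGrowth_chirp c) f).symm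
  rw [hcoe, ← SchwartzMap.fourier_coe]
  exact SchwartzMap.integrable _

end Fourier

/-- The hyperbolic cotangent `coth β = cosh β / sinh β`, the rate of the chirps in `H_β`; its value
at `β = 0` is the junk value `0`. -/
def coth (β : ℝ) : ℝ :=
  Real.cosh β / Real.sinh β

lemma coth_neg (β : ℝ) : coth (-β) = -coth β := by
  rw [coth, coth, Real.cosh_neg, Real.sinh_neg, div_neg]

/-- The constant `i e^β / sinh β` in front of the transformation `H_β`. -/
def fracHCoeff (β : ℝ) : ℂ :=
  Complex.I * Real.exp β / Real.sinh β

lemma fracHCoeff_ne_zero {β : ℝ} (hβ : β ≠ 0) : fracHCoeff β ≠ 0 := by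
  have hs : (Real.sinh β : ℂ) ≠ 0 := Complex.ofReal_ne_zero.mpr (Real.sinh_ne_zero.mpr hβ)
  exact div_ne_zero
    (mul_ne_zero Complex.I_ne_zero (Complex.ofReal_ne_zero.mpr (Real.exp_ne_zero β))) hs

lemma fracHCoeff_neg_mul_fracHCoeff (β : ℝ) :
    fracHCoeff (-β) * fracHCoeff β = ((Real.sinh β : ℂ) ^ 2)⁻¹ := by
  have hexp : (Real.exp (-β) : ℂ) * Real.exp β = 1 := by
    rw [← Complex.ofReal_mul, ← Real.exp_add, neg_add_cancel, Real.exp_zero, Complex.ofReal_one]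
  calc fracHCoeff (-β) * fracHCoeff β
      = -Complex.I ^ 2 * (Real.exp (-β) * Real.exp β) * ((Real.sinh β : ℂ) ^ 2)⁻¹ := by
        rw [fracHCoeff, fracHCoeff, Real.sinh_neg, Complex.ofReal_neg]
        ring
    _ = ((Real.sinh β : ℂ) ^ 2)⁻¹ := by rw [hexp, Complex.I_sq]; ring

lemma fracH_eq_fourier (β : ℝ) (f : Plane → ℂ) (x : Plane) :
    fracH β f x = fracHCoeff β * chirp (coth β) x *
      𝓕 (fun y ↦ chirp (coth β) y • f y) ((-Real.sinh β)⁻¹ • x) := by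
  have hphase (y : Plane) : Complex.exp (2 * Real.pi * Complex.I * ⟪x, y⟫ / Real.sinh β) =
      𝐞 (-⟪y, (-Real.sinh β)⁻¹ • x⟫) := by
    rw [Real.fourierChar_apply, real_inner_smul_right, real_inner_comm, inv_neg]
    congr 1
    push_cast
    ring
  simp only [fracH, fracHCoeff, coth, Real.fourier_eq, Circle.smul_def, smul_eq_mul, coe_chirp,
    hphase, Complex.ofReal_div]
  congr 2 with y
  ring

lemma chirp_neg_smul_fracH (β : ℝ) (f : Plane → ℂ) (x : Plane) :
    chirp (-coth β) x • fracH β f x = fracHCoeff β •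
      𝓕 (fun y ↦ chirp (coth β) y • f y) ((-Real.sinh β)⁻¹ • x) := by
  rw [fracH_eq_fourier, chirp_neg, inv_smul_eq_iff, Circle.smul_def, smul_eq_mul, smul_eq_mul]
  ring

lemma integrable_fracH_iff {β : ℝ} (hβ : β ≠ 0) {f : Plane → ℂ} :
    Integrable (fracH β f) ↔ Integrable (𝓕 fun y ↦ chirp (coth β) y • f y) := by
  have hs : (-Real.sinh β)⁻¹ ≠ 0 := inv_ne_zero (neg_ne_zero.mpr (Real.sinh_ne_zero.mpr hβ))
  rw [← integrable_circle_smul_iff (continuous_chirp (-coth β)).aestronglyMeasurable]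
  simp only [chirp_neg_smul_fracH]
  rw [integrable_fun_smul_iff (fracHCoeff_ne_zero hβ), integrable_comp_smul_iff volume _ hs]

lemma fracH_neg_fracH {β : ℝ} (hβ : β ≠ 0) (f : Plane → ℂ) (x : Plane) :
    fracH (-β) (fracH β f) x = (chirp (coth β) x)⁻¹ •
      𝓕⁻ (𝓕 fun y ↦ chirp (coth β) y • f y) x := by
  have hs : Real.sinh β ≠ 0 := Real.sinh_ne_zero.mpr hβ
  have hs' : (Real.sinh β : ℂ) ≠ 0 := Complex.ofReal_ne_zero.mpr hs
  set g : Plane → ℂ := fun y ↦ chirp (coth β) y • f y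
  have houter : 𝓕 (fun y ↦ chirp (-coth β) y • fracH β f y) ((Real.sinh β)⁻¹ • x) =
      fracHCoeff β * ((Real.sinh β : ℂ) ^ 2 * 𝓕⁻ (𝓕 g) x) := by
    simp only [chirp_neg_smul_fracH]
    rw [fourier_const_smul, fourier_comp_inv_smul _ (neg_ne_zero.mpr hs),
      finrank_euclideanSpace_fin, neg_sq, abs_sq, neg_smul, smul_inv_smul₀ hs,
      ← Real.fourierInv_eq_fourier_neg, smul_eq_mul, Complex.real_smul, Complex.ofReal_pow]
  calc fracH (-β) (fracH β f) x
      = fracHCoeff (-β) * chirp (-coth β) x *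
          (fracHCoeff β * ((Real.sinh β : ℂ) ^ 2 * 𝓕⁻ (𝓕 g) x)) := by
        rw [fracH_eq_fourier, coth_neg, Real.sinh_neg, neg_neg, houter]
    _ = fracHCoeff (-β) * fracHCoeff β * (Real.sinh β : ℂ) ^ 2 *
          (chirp (-coth β) x * 𝓕⁻ (𝓕 g) x) := by ring
    _ = (chirp (coth β) x)⁻¹ • 𝓕⁻ (𝓕 g) x := by
        rw [fracHCoeff_neg_mul_fracHCoeff, inv_mul_cancel₀ (pow_ne_zero 2 hs'), one_mul, chirp_neg,
          Circle.smul_def, smul_eq_mul]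

theorem stmt3_general {β : ℝ} (hβ : β ≠ 0) {f : Plane → ℂ} (hf : Integrable f)
    (hfracH : Integrable (fracH β f)) {ρ' : Plane} (hcont : ContinuousAt f ρ') :
    fracH (-β) (fracH β f) ρ' = f ρ' := by
  have hchirp : Continuous (chirp (coth β) : Plane → Circle) := continuous_chirp _
  have hg : Integrable fun y ↦ chirp (coth β) y • f y :=
    (integrable_circle_smul_iff hchirp.aestronglyMeasurable).mpr hf
  rw [fracH_neg_fracH hβ, hg.fourierInv_fourier_eq ((integrable_fracH_iff hβ).mp hfracH)
    (hchirp.continuousAt.smul hcont), inv_smul_smul]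

/-- `H_{−β}` is the inverse of `H_β` on Schwartz functions. -/
theorem stmt3 (β : ℝ) (hβ : β ≠ 0)
    (f : SchwartzMap Plane ℂ) (ρ' : Plane) :
    fracH (-β) (fun σ => fracH β (⇑f) σ) ρ' = f ρ' :=
  stmt3_general hβ f.integrable
    ((integrable_fracH_iff hβ).mpr (integrable_fourier_chirp_smul _ f)) f.continuous.continuousAt

end
end
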